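/- Let c ∈ ℝ with -1 < c < 0. Then W^s(θ) = ⋂_{n=0}^{∞} f^{-n}(A ∪ H₂), where f^{-n} denotes the set preimage under the n-th iterate of f; that is, z ∈ W^s(θ) if and only if fⁿ(z) ∈ A ∪ H₂ for all n ≥ 0. -/

import Mathlib

open Set Filter Topology

/-- The map `f(x,y) = (xy + c, x)`. -/
noncomputable def fc (c : ℝ) : ℝ × ℝ → ℝ × ℝ := fun z => (z.1 * z.2 + c, z.1)

/-- `a₁ = (1 - √(1-4c))/2`. -/
noncomputable def a1 (c : ℝ) : ℝ := (1 - Real.sqrt (1 - 4 * c)) / 2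

/-- `a₂ = (1 + √(1-4c))/2`. -/
noncomputable def a2 (c : ℝ) : ℝ := (1 + Real.sqrt (1 - 4 * c)) / 2

/-!
The second coordinates `u n` of an orbit satisfy `u (n + 2) = u (n + 1) * u n + c`, and the orbit is
`(u (n + 1), u n)`; it lies in `A ∪ H₂` when consecutive terms are nonnegative and on opposite sides
of `a = a₂`.

If this holds for all `n`, the terms alternate between `[a, ∞)` and `[0, a]`. Four consecutive
terms `h, l, h', l'` with `h` and `h'` high satisfy `h' ≤ h`, since `h < h'` would give
`l' = h' l + c ≥ h l + c = h' > h ≥ a`. So the high terms converge, hence so do the low ones, and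
passing to the limit in the recurrence shows that both limits are equal, hence equal to `a`.

Conversely, `A ∪ H₂` is backward invariant, so it suffices that a sequence converging to `a` has
consecutive terms on opposite sides of `a` at arbitrarily late times. Two positive terms strictly on
the same side of `a` keep all later terms on that side and bounded away from `a`.
-/

theorem tendsto_of_tendsto_even_of_tendsto_odd {α : Type*} {u : ℕ → α} {l : Filter α}
    (heven : Tendsto (fun k => u (2 * k)) atTop l)
    (hodd : Tendsto (fun k => u (2 * k + 1)) atTop l) : Tendsto u atTop l := by
  intro s hs
  obtain ⟨N, hN⟩ := eventually_atTop.1 (heven hs)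
  obtain ⟨M, hM⟩ := eventually_atTop.1 (hodd hs)
  refine eventually_atTop.2 ⟨2 * N + 2 * M, fun n hn => ?_⟩
  rcases Nat.even_or_odd' n with ⟨k, rfl | rfl⟩
  · exact hN k (by lia)
  · exact hM k (by lia)

theorem tendsto_prodMk_succ_iff {X : Type*} [TopologicalSpace X] {u : ℕ → X} {a : X} :
    Tendsto (fun n => (u (n + 1), u n)) atTop (𝓝 (a, a)) ↔ Tendsto u atTop (𝓝 a) := by
  rw [Prod.tendsto_iff, tendsto_add_atTop_iff_nat 1, and_self]

theorem a2_mul_self_add {c : ℝ} (hc : c ≤ 1 / 4) : a2 c * a2 c + c = a2 c := by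
  have hsq := Real.mul_self_sqrt (show 0 ≤ 1 - 4 * c by linarith)
  unfold a2
  linarith

theorem one_le_a2 {c : ℝ} (hc : c ≤ 0) : 1 ≤ a2 c := by
  have hsqrt : 1 ≤ Real.sqrt (1 - 4 * c) := Real.one_le_sqrt.2 (by linarith)
  unfold a2
  linarith

/-- The region `A ∪ H₂`, with the threshold `a₂` replaced by an arbitrary `a`. -/
def straddleRegion (a : ℝ) : Set (ℝ × ℝ) := Icc 0 a ×ˢ Ici a ∪ Ici a ×ˢ Icc 0 a

section Region

variable {a c x y : ℝ}

theorem mk_mem_straddleRegion :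
    (x, y) ∈ straddleRegion a ↔ x ∈ Icc 0 a ∧ a ≤ y ∨ a ≤ x ∧ y ∈ Icc 0 a :=
  Iff.rfl

theorem lt_and_lt_or_lt_and_lt_of_notMem_straddleRegion (hx : 0 ≤ x) (hy : 0 ≤ y)
    (h : (x, y) ∉ straddleRegion a) : a < x ∧ a < y ∨ x < a ∧ y < a := by
  simp only [mk_mem_straddleRegion, mem_Icc] at h
  grind

theorem mem_straddleRegion_of_fc_mem (ha : 1 ≤ a) (hfix : a * a + c = a)
    (h : fc c (x, y) ∈ straddleRegion a) : (x, y) ∈ straddleRegion a := by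
  have hapos : 0 < a := by linarith
  rcases h with ⟨⟨hlo : 0 ≤ x * y + c, hhi : x * y + c ≤ a⟩, hx : a ≤ x⟩ |
      ⟨hge : a ≤ x * y + c, hx : 0 ≤ x, hxa : x ≤ a⟩
  · have hxpos : 0 < x := hapos.trans_le hx
    have hc : c ≤ 0 := by nlinarith
    have hy : 0 ≤ y := nonneg_of_mul_nonneg_right (by linarith : 0 ≤ x * y) hxpos
    have hya : x * y ≤ x * a := calc
      x * y ≤ a * a := by linarith
      _ ≤ x * a := by gcongr
    exact .inr ⟨hx, hy, le_of_mul_le_mul_left hya hxpos⟩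
  · have haxy : a * a ≤ x * y := by linarith
    have hy : 0 < y := pos_of_mul_pos_right ((mul_pos hapos hapos).trans_le haxy) hx
    have hay : a * a ≤ a * y := haxy.trans (by gcongr)
    exact .inl ⟨⟨hx, hxa⟩, le_of_mul_le_mul_left hay hapos⟩

end Region

/-- The second-order recurrence satisfied by the second coordinates along an orbit of `fc c`. -/
def ProductRecurrence (c : ℝ) (u : ℕ → ℝ) : Prop := ∀ n, u (n + 2) = u (n + 1) * u n + c

namespace ProductRecurrence

variable {a c m : ℝ} {u : ℕ → ℝ}

theorem shift (hu : ProductRecurrence c u) (M : ℕ) : ProductRecurrence c fun n => u (n + M) := by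
  intro n
  simpa only [add_right_comm] using hu (n + M)

theorem le_of_le_mul_self_add (hu : ProductRecurrence c u) (hm : 0 ≤ m) (hmc : m ≤ m * m + c)
    (h0 : m ≤ u 0) (h1 : m ≤ u 1) (n : ℕ) : m ≤ u n := by
  induction n using Nat.twoStepInduction with
  | zero => exact h0
  | one => exact h1
  | more n ih ih' => calc
      m ≤ m * m + c := hmc
      _ ≤ u (n + 1) * u n + c := by
        gcongr
        exact hm.trans ih'
      _ = u (n + 2) := (hu n).symm

theorem le_of_mul_self_add_le (hu : ProductRecurrence c u) (hnonneg : ∀ n, 0 ≤ u n)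
    (hmc : m * m + c ≤ m) (h0 : u 0 ≤ m) (h1 : u 1 ≤ m) (n : ℕ) : u n ≤ m := by
  induction n using Nat.twoStepInduction with
  | zero => exact h0
  | one => exact h1
  | more n ih ih' => calc
      u (n + 2) = u (n + 1) * u n + c := hu n
      _ ≤ m * m + c := by
        gcongr
        · exact hnonneg n
        · exact (hnonneg _).trans ih'
      _ ≤ m := hmc

theorem mem_straddleRegion_of_nonneg_of_tendsto (hu : ProductRecurrence c u)
    (ha : 1 ≤ a) (hfix : a * a + c = a) (hnonneg : ∀ n, 0 ≤ u n)
    (hlim : Tendsto u atTop (𝓝 a)) : (u 1, u 0) ∈ straddleRegion a := by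
  have hfactor (m : ℝ) : m * m + c - m = (m - a) * (m + a - 1) := by linear_combination hfix
  by_contra hnot
  rcases lt_and_lt_or_lt_and_lt_of_notMem_straddleRegion (hnonneg 1) (hnonneg 0) hnot with h | h
  · obtain ⟨m, ham, hm⟩ := exists_between (lt_min h.1 h.2)
    have hmc : m ≤ m * m + c := by
      rw [← sub_nonneg, hfactor]
      exact mul_nonneg (by linarith) (by linarith)
    have hbound := hu.le_of_le_mul_self_add (by linarith) hmc
      (hm.le.trans (min_le_right _ _)) (hm.le.trans (min_le_left _ _))
    exact ham.not_ge (ge_of_tendsto' hlim hbound)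
  · obtain ⟨m, hm, hma⟩ := exists_between (max_lt h.1 h.2)
    have hm0 : 0 ≤ m := (hnonneg 1).trans ((le_max_left _ _).trans hm.le)
    have hmc : m * m + c ≤ m := by
      rw [← sub_nonpos, hfactor]
      exact mul_nonpos_of_nonpos_of_nonneg (by linarith) (by linarith)
    have hbound := hu.le_of_mul_self_add_le hnonneg hmc
      ((le_max_right _ _).trans hm.le) ((le_max_left _ _).trans hm.le)
    exact hma.not_ge (le_of_tendsto' hlim hbound)

theorem mem_straddleRegion_of_add (hu : ProductRecurrence c u)
    (ha : 1 ≤ a) (hfix : a * a + c = a) {n : ℕ} (k : ℕ)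
    (h : (u (n + k + 1), u (n + k)) ∈ straddleRegion a) : (u (n + 1), u n) ∈ straddleRegion a := by
  induction k with
  | zero => exact h
  | succ k ih =>
    refine ih (mem_straddleRegion_of_fc_mem ha hfix ?_)
    rw [fc, ← hu (n + k)]
    exact h

theorem mem_straddleRegion_of_tendsto (hu : ProductRecurrence c u)
    (ha : 1 ≤ a) (hfix : a * a + c = a) (hlim : Tendsto u atTop (𝓝 a)) (n : ℕ) :
    (u (n + 1), u n) ∈ straddleRegion a := by
  obtain ⟨N, hN⟩ := eventually_atTop.1 (hlim.eventually (lt_mem_nhds (zero_lt_one.trans_le ha)))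
  have hlate := (hu.shift (n + N)).mem_straddleRegion_of_nonneg_of_tendsto ha hfix
    (fun k => (hN _ (by lia)).le) ((tendsto_add_atTop_iff_nat (n + N)).2 hlim)
  rw [zero_add, Nat.add_comm 1] at hlate
  exact hu.mem_straddleRegion_of_add ha hfix N hlate

theorem even_succ_le_even (hu : ProductRecurrence c u) (hhigh : ∀ k, a ≤ u (2 * k))
    (hlow : ∀ k, u (2 * k + 1) ∈ Icc 0 a) (k : ℕ) : u (2 * (k + 1)) ≤ u (2 * k) := by
  by_contra! hlt
  have : u (2 * (k + 1)) ≤ u (2 * (k + 1) + 1) := calc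
    u (2 * (k + 1)) = u (2 * k) * u (2 * k + 1) + c := by rw [mul_comm (u _)]; exact hu (2 * k)
    _ ≤ u (2 * (k + 1)) * u (2 * k + 1) + c := by
      gcongr
      exact (hlow k).1
    _ = u (2 * (k + 1) + 1) := (hu (2 * k + 1)).symm
  linarith [hhigh k, (hlow (k + 1)).2]

theorem tendsto_of_le_even_of_odd_mem_Icc (hu : ProductRecurrence c u) (ha : 0 < a)
    (hhigh : ∀ k, a ≤ u (2 * k)) (hlow : ∀ k, u (2 * k + 1) ∈ Icc 0 a) :
    Tendsto u atTop (𝓝 a) := by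
  obtain ⟨H, hH⟩ : ∃ H, Tendsto (fun k => u (2 * k)) atTop (𝓝 H) :=
    ⟨_, tendsto_atTop_ciInf (antitone_nat_of_succ_le (hu.even_succ_le_even hhigh hlow))
      ⟨a, forall_mem_range.2 hhigh⟩⟩
  have haH : a ≤ H := ge_of_tendsto' hH hhigh
  have hH0 : H ≠ 0 := (ha.trans_le haH).ne'
  have hH' : Tendsto (fun k => u (2 * (k + 1))) atTop (𝓝 H) :=
    hH.comp (tendsto_add_atTop_nat 1)
  have hL : Tendsto (fun k => u (2 * k + 1)) atTop (𝓝 ((H - c) / H)) := by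
    refine ((hH'.sub_const c).div hH hH0).congr fun k => ?_
    have hk : u (2 * k) ≠ 0 := (ha.trans_le (hhigh k)).ne'
    rw [Pi.div_apply, div_eq_iff hk, sub_eq_iff_eq_add]
    exact hu (2 * k)
  have hL' : Tendsto (fun k => u (2 * (k + 1) + 1)) atTop (𝓝 (H * ((H - c) / H) + c)) :=
    ((hH'.mul hL).add_const c).congr fun k => (hu (2 * k + 1)).symm
  have hLH : (H - c) / H = H := calc
    (H - c) / H = H * ((H - c) / H) + c :=
      tendsto_nhds_unique (hL.comp (tendsto_add_atTop_nat 1)) hL'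
    _ = H := by rw [mul_div_cancel₀ _ hH0, sub_add_cancel]
  rw [hLH] at hL
  obtain rfl : H = a := le_antisymm (le_of_tendsto' hL fun k => (hlow k).2) haH
  exact tendsto_of_tendsto_even_of_tendsto_odd hH hL

theorem le_add_two_of_le (hu : ProductRecurrence c u) (hfix : a * a + c = a) {n : ℕ}
    (hmem : (u (n + 2), u (n + 1)) ∈ straddleRegion a)
    (hhigh : a ≤ u n) (hlow : u (n + 1) ∈ Icc 0 a) : a ≤ u (n + 2) := by
  have ha : 0 ≤ a := hlow.1.trans hlow.2
  rcases hmem with ⟨-, hge : a ≤ u (n + 1)⟩ | ⟨hgoal, -⟩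
  · have heq : u (n + 1) = a := le_antisymm hlow.2 hge
    calc
      a = a * a + c := hfix.symm
      _ ≤ a * u n + c := by gcongr
      _ = u (n + 2) := by rw [hu n, heq]
  · exact hgoal

theorem mem_Icc_add_two_of_mem_Icc (hu : ProductRecurrence c u) (hfix : a * a + c = a) {n : ℕ}
    (hmem : (u (n + 2), u (n + 1)) ∈ straddleRegion a)
    (hlow : u n ∈ Icc 0 a) (hhigh : a ≤ u (n + 1)) : u (n + 2) ∈ Icc 0 a := by
  have ha : 0 ≤ a := hlow.1.trans hlow.2
  rcases hmem with ⟨hgoal, -⟩ | ⟨hge : a ≤ u (n + 2), -, hle : u (n + 1) ≤ a⟩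
  · exact hgoal
  · have heq : u (n + 1) = a := le_antisymm hle hhigh
    refine ⟨ha.trans hge, ?_⟩
    calc
      u (n + 2) = a * u n + c := by rw [hu n, heq]
      _ ≤ a * a + c := by gcongr; exact hlow.2
      _ = a := hfix

theorem le_even_and_odd_mem_Icc (hu : ProductRecurrence c u) (hfix : a * a + c = a)
    (hmem : ∀ n, (u (n + 1), u n) ∈ straddleRegion a)
    (h0 : a ≤ u 0) (h1 : u 1 ∈ Icc 0 a) (k : ℕ) :
    a ≤ u (2 * k) ∧ u (2 * k + 1) ∈ Icc 0 a := by
  induction k with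
  | zero => exact ⟨h0, h1⟩
  | succ k ih =>
    have hhigh := hu.le_add_two_of_le hfix (hmem _) ih.1 ih.2
    exact ⟨hhigh, hu.mem_Icc_add_two_of_mem_Icc hfix (hmem _) ih.2 hhigh⟩

theorem tendsto_of_mem_straddleRegion (hu : ProductRecurrence c u) (ha : 0 < a)
    (hfix : a * a + c = a) (hmem : ∀ n, (u (n + 1), u n) ∈ straddleRegion a) :
    Tendsto u atTop (𝓝 a) := by
  rcases hmem 0 with ⟨h1, h0⟩ | ⟨h1, h0⟩
  · have halt := hu.le_even_and_odd_mem_Icc hfix hmem h0 h1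
    exact hu.tendsto_of_le_even_of_odd_mem_Icc ha (fun k => (halt k).1) fun k => (halt k).2
  · have h2 := hu.mem_Icc_add_two_of_mem_Icc hfix (hmem 1) h0 h1
    have halt := (hu.shift 1).le_even_and_odd_mem_Icc hfix (fun n => hmem (n + 1)) h1 h2
    rw [← tendsto_add_atTop_iff_nat 1]
    exact (hu.shift 1).tendsto_of_le_even_of_odd_mem_Icc ha (fun k => (halt k).1)
      fun k => (halt k).2

theorem tendsto_iff_forall_mem_straddleRegion (hu : ProductRecurrence c u)
    (ha : 1 ≤ a) (hfix : a * a + c = a) :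
    Tendsto u atTop (𝓝 a) ↔ ∀ n, (u (n + 1), u n) ∈ straddleRegion a :=
  ⟨hu.mem_straddleRegion_of_tendsto ha hfix,
    hu.tendsto_of_mem_straddleRegion (zero_lt_one.trans_le ha) hfix⟩

end ProductRecurrence

section Orbit

variable (c : ℝ) (z : ℝ × ℝ)

theorem iterate_fc_eq_mk (n : ℕ) :
    (fc c)^[n] z = (((fc c)^[n + 1] z).2, ((fc c)^[n] z).2) := by
  rw [Function.iterate_succ_apply']
  rfl

theorem productRecurrence_iterate_fc : ProductRecurrence c fun n => ((fc c)^[n] z).2 := by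
  intro n
  simp only [Function.iterate_succ_apply', fc]

end Orbit

theorem stmt4_general (c : ℝ) (hc : c ≤ 0) :
    {z : ℝ × ℝ | Tendsto (fun n => (fc c)^[n] z) atTop (𝓝 (a2 c, a2 c))} =
      ⋂ n : ℕ, (fc c)^[n] ⁻¹'
        (Icc (0 : ℝ) (a2 c) ×ˢ Ici (a2 c) ∪ Ici (a2 c) ×ˢ Icc (0 : ℝ) (a2 c)) := by
  ext z
  have hfix : a2 c * a2 c + c = a2 c := a2_mul_self_add (by linarith)
  have hequiv := (productRecurrence_iterate_fc c z).tendsto_iff_forall_mem_straddleRegion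
    (one_le_a2 hc) hfix
  rw [← tendsto_prodMk_succ_iff] at hequiv
  simp only [← iterate_fc_eq_mk] at hequiv
  rw [mem_iInter]
  exact hequiv

theorem stmt4 (c : ℝ) (hc1 : -1 < c) (hc2 : c < 0) :
    {z : ℝ × ℝ | Tendsto (fun n => (fc c)^[n] z) atTop (𝓝 (a2 c, a2 c))} =
      ⋂ n : ℕ, (fc c)^[n] ⁻¹'
        (Icc (0 : ℝ) (a2 c) ×ˢ Ici (a2 c) ∪ Ici (a2 c) ×ˢ Icc (0 : ℝ) (a2 c)) :=
  stmt4_general c hc2.le
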